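/- arXiv:2406.15959 — 6 statements merged into one kernel-verified Lean document; each statement's English description precedes it below -/
import Mathlib

section
/- Let K be a real m×n matrix with KᵀK invertible, K⁺ := (KᵀK)⁻¹Kᵀ, A a real q×n matrix, B a real m×p matrix, and F ∈ ℝᵐ. If c ∈ ℝⁿ and u ∈ ℝᵖ satisfy KᵀK·c + KᵀB·u = Kᵀ·F and BᵀK·c + Bᵀ(I + K⁺ᵀAᵀA K⁺)B·u = Bᵀ(I + K⁺ᵀAᵀA K⁺)·F, then u satisfies the Schur complement system Bᵀ(I + K⁺ᵀAᵀA K⁺ − K·K⁺)B·u = Bᵀ(I + K⁺ᵀAᵀA K⁺ − K·K⁺)·F. -/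
open Matrix

/-- if `(c, u)` satisfies the normal equations, then `u` satisfies the
Schur complement system `Bᵀ(I + K⁺ᵀAᵀAK⁺ − KK⁺)Bu = Bᵀ(I + K⁺ᵀAᵀAK⁺ − KK⁺)F`. -/
theorem stmt2 (m n q p : ℕ) (K : Matrix (Fin m) (Fin n) ℝ)
    (hK : IsUnit (Kᵀ * K))
    (Kp : Matrix (Fin n) (Fin m) ℝ) (hKp : Kp = (Kᵀ * K)⁻¹ * Kᵀ)
    (A : Matrix (Fin q) (Fin n) ℝ) (B : Matrix (Fin m) (Fin p) ℝ)
    (F : Fin m → ℝ) (c : Fin n → ℝ) (u : Fin p → ℝ)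
    (h1 : (Kᵀ * K) *ᵥ c + (Kᵀ * B) *ᵥ u = Kᵀ *ᵥ F)
    (h2 : (Bᵀ * K) *ᵥ c + (Bᵀ * (1 + Kpᵀ * Aᵀ * A * Kp) * B) *ᵥ u =
      (Bᵀ * (1 + Kpᵀ * Aᵀ * A * Kp)) *ᵥ F) :
    (Bᵀ * (1 + Kpᵀ * Aᵀ * A * Kp - K * Kp) * B) *ᵥ u =
      (Bᵀ * (1 + Kpᵀ * Aᵀ * A * Kp - K * Kp)) *ᵥ F := by
  generalize 1 + Kpᵀ * Aᵀ * A * Kp = M at h2 ⊢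
  have hd : IsUnit (Kᵀ * K).det := (Matrix.isUnit_iff_isUnit_det _).1 hK
  have h3 : c + (Kp * B) *ᵥ u = Kp *ᵥ F := by
    have h := congrArg (fun v => (Kᵀ * K)⁻¹ *ᵥ v) h1
    simp only [Matrix.mulVec_add, Matrix.mulVec_mulVec] at h
    rw [Matrix.nonsing_inv_mul _ hd, Matrix.one_mulVec, ← Matrix.mul_assoc, ← hKp] at h
    exact h
  have h4 := congrArg (fun v => (Bᵀ * K) *ᵥ v) h3
  simp only [Matrix.mulVec_add, Matrix.mulVec_mulVec] at h4
  simp only [Matrix.mul_sub, Matrix.sub_mul, Matrix.sub_mulVec]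
  simp only [Matrix.mul_assoc] at h2 h4 ⊢
  rw [← h2, ← h4]
  abel
end

section
/- Let K be a real m×n matrix with KᵀK invertible, K⁺ := (KᵀK)⁻¹Kᵀ, A a real q×n matrix, B a real m×p matrix, and F ∈ ℝᵐ. If u ∈ ℝᵖ satisfies the Schur complement system Bᵀ(I + K⁺ᵀAᵀA K⁺ − K·K⁺)B·u = Bᵀ(I + K⁺ᵀAᵀA K⁺ − K·K⁺)·F and c := K⁺·(F − B·u), then the pair (c, u) satisfies KᵀK·c + KᵀB·u = Kᵀ·F and BᵀK·c + Bᵀ(I + K⁺ᵀAᵀA K⁺)B·u = Bᵀ(I + K⁺ᵀAᵀA K⁺)·F. -/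
open Matrix

/-- if `u` satisfies the Schur complement system and `c := K⁺(F − Bu)`,
then `(c, u)` satisfies the normal equations. -/
theorem stmt3 (m n q p : ℕ) (K : Matrix (Fin m) (Fin n) ℝ)
    (hK : IsUnit (Kᵀ * K))
    (Kp : Matrix (Fin n) (Fin m) ℝ) (hKp : Kp = (Kᵀ * K)⁻¹ * Kᵀ)
    (A : Matrix (Fin q) (Fin n) ℝ) (B : Matrix (Fin m) (Fin p) ℝ)
    (F : Fin m → ℝ) (u : Fin p → ℝ)
    (hu : (Bᵀ * (1 + Kpᵀ * Aᵀ * A * Kp - K * Kp) * B) *ᵥ u =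
      (Bᵀ * (1 + Kpᵀ * Aᵀ * A * Kp - K * Kp)) *ᵥ F)
    (c : Fin n → ℝ) (hc : c = Kp *ᵥ (F - B *ᵥ u)) :
    (Kᵀ * K) *ᵥ c + (Kᵀ * B) *ᵥ u = Kᵀ *ᵥ F ∧
    (Bᵀ * K) *ᵥ c + (Bᵀ * (1 + Kpᵀ * Aᵀ * A * Kp) * B) *ᵥ u =
      (Bᵀ * (1 + Kpᵀ * Aᵀ * A * Kp)) *ᵥ F := by
  have h1 : (Kᵀ * K) * Kp = Kᵀ := by
    rw [hKp, ← Matrix.mul_assoc, Matrix.mul_nonsing_inv _ ((Matrix.isUnit_iff_isUnit_det _).1 hK),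
      Matrix.one_mul]
  subst hc
  constructor
  · rw [Matrix.mulVec_mulVec, h1, Matrix.mulVec_sub, Matrix.mulVec_mulVec, sub_add_cancel]
  · generalize 1 + Kpᵀ * Aᵀ * A * Kp = M at hu ⊢
    rw [Matrix.mul_sub, Matrix.sub_mul, Matrix.sub_mulVec, Matrix.sub_mulVec] at hu
    rw [Matrix.mulVec_mulVec, Matrix.mulVec_sub, Matrix.mulVec_mulVec, Matrix.mul_assoc Bᵀ K Kp]
    rw [sub_eq_sub_iff_add_eq_add] at hu
    rw [sub_add_eq_add_sub, sub_eq_iff_eq_add, ← hu, add_comm]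
end

section
/- Let K be a real m×n matrix with KᵀK invertible, K⁺ := (KᵀK)⁻¹Kᵀ, A a real q×n matrix, and B a real m×p matrix. If the (m+q)×(n+p) block matrix [[K, B], [A, 0]] has full column rank (i.e., its kernel is trivial), then the Schur complement matrix S := Bᵀ·(I + K⁺ᵀAᵀA K⁺ − K·K⁺)·B is symmetric positive definite; in particular S is invertible. -/
open Matrix

/-- if the block matrix `[[K, B], [A, 0]]` has full column rank (trivial
kernel), then `S := Bᵀ(I + K⁺ᵀAᵀAK⁺ − KK⁺)B` is symmetric positive definite; in
particular `S` is invertible. -/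
theorem stmt6 (m n q p : ℕ) (K : Matrix (Fin m) (Fin n) ℝ)
    (hK : IsUnit (Kᵀ * K))
    (Kp : Matrix (Fin n) (Fin m) ℝ) (hKp : Kp = (Kᵀ * K)⁻¹ * Kᵀ)
    (A : Matrix (Fin q) (Fin n) ℝ) (B : Matrix (Fin m) (Fin p) ℝ)
    (hfull : ∀ x : Fin n ⊕ Fin p → ℝ, fromBlocks K B A 0 *ᵥ x = 0 → x = 0)
    (S : Matrix (Fin p) (Fin p) ℝ)
    (hS : S = Bᵀ * (1 + Kpᵀ * Aᵀ * A * Kp - K * Kp) * B) :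
    (S.IsSymm ∧ S.PosDef) ∧ IsUnit S := by
  have hdet : IsUnit (Kᵀ * K).det := (Matrix.isUnit_iff_isUnit_det _).1 hK
  have h1 : Kp * K = 1 := by
    rw [hKp, Matrix.mul_assoc, Matrix.nonsing_inv_mul _ hdet]
  have h2 : (K * Kp)ᵀ = K * Kp := by
    rw [hKp]
    simp [Matrix.transpose_mul, Matrix.transpose_nonsing_inv, Matrix.mul_assoc]
  have h3 : (K * Kp) * (K * Kp) = K * Kp := by
    rw [Matrix.mul_assoc, ← Matrix.mul_assoc Kp, h1, Matrix.one_mul]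
  have h4 : (1 - K * Kp)ᵀ * (1 - K * Kp) = 1 - K * Kp := by
    rw [Matrix.transpose_sub, h2, Matrix.transpose_one, Matrix.sub_mul, Matrix.mul_sub,
      Matrix.mul_sub, h3]
    simp
  have hSM : S = (fromRows ((1 - K * Kp) * B) (A * Kp * B))ᴴ *
      fromRows ((1 - K * Kp) * B) (A * Kp * B) := by
    rw [Matrix.conjTranspose_eq_transpose_of_trivial, Matrix.transpose_fromRows,
      Matrix.fromCols_mul_fromRows]
    have e1 : ((1 - K * Kp) * B)ᵀ * ((1 - K * Kp) * B) = Bᵀ * (1 - K * Kp) * B := by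
      rw [Matrix.transpose_mul, Matrix.mul_assoc, ← Matrix.mul_assoc _ _ B, h4,
        Matrix.mul_assoc]
    rw [e1, hS, add_sub_right_comm, Matrix.mul_add, Matrix.add_mul]
    simp only [Matrix.transpose_mul, Matrix.mul_assoc]
  have hpd : S.PosDef := by
    rw [hSM]
    apply Matrix.PosDef.conjTranspose_mul_self
    rw [← Matrix.coe_mulVecLin, injective_iff_map_eq_zero]
    intro v hv
    rw [Matrix.mulVecLin_apply, Matrix.fromRows_mulVec] at hv
    have hv1 : ((1 - K * Kp) * B) *ᵥ v = 0 := by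
      ext i; exact congrFun hv (Sum.inl i)
    have hv2 : (A * Kp * B) *ᵥ v = 0 := by
      ext i; exact congrFun hv (Sum.inr i)
    have key := hfull (Sum.elim (-((Kp * B) *ᵥ v)) v) (by
      rw [Matrix.fromBlocks_mulVec]
      have a1 : K *ᵥ (-((Kp * B) *ᵥ v)) + B *ᵥ v = 0 := by
        rw [Matrix.sub_mul, Matrix.one_mul, Matrix.sub_mulVec] at hv1
        rw [Matrix.mulVec_neg, Matrix.mulVec_mulVec, ← Matrix.mul_assoc, neg_add_eq_sub, hv1]
      have a2 : A *ᵥ (-((Kp * B) *ᵥ v)) + (0 : Matrix (Fin q) (Fin p) ℝ) *ᵥ v = 0 := by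
        rw [Matrix.mulVec_neg, Matrix.mulVec_mulVec, ← Matrix.mul_assoc, hv2]
        simp
      simp only [Sum.elim_comp_inl, Sum.elim_comp_inr]
      rw [a1, a2]
      ext i; cases i <;> rfl)
    ext i; exact congrFun key (Sum.inr i)
  refine ⟨⟨?_, hpd⟩, hpd.isUnit⟩
  have := hpd.isHermitian
  rwa [Matrix.IsHermitian, Matrix.conjTranspose_eq_transpose_of_trivial] at this
end

section
/- Let K be a real m×n matrix with KᵀK invertible, K⁺ := (KᵀK)⁻¹Kᵀ, A a real q×n matrix, and B a real m×p matrix. If the block matrix [[K, B], [A, 0]] has full column rank, then the eliminated block matrix [[K, B], [0, −A·K⁺·B]] also has full column rank. -/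
open Matrix

/-- if `[[K, B], [A, 0]]` has full column rank, then the eliminated block
matrix `[[K, B], [0, −AK⁺B]]` also has full column rank. -/
theorem stmt7 (m n q p : ℕ) (K : Matrix (Fin m) (Fin n) ℝ)
    (hK : IsUnit (Kᵀ * K))
    (Kp : Matrix (Fin n) (Fin m) ℝ) (hKp : Kp = (Kᵀ * K)⁻¹ * Kᵀ)
    (A : Matrix (Fin q) (Fin n) ℝ) (B : Matrix (Fin m) (Fin p) ℝ)
    (hfull : ∀ x : Fin n ⊕ Fin p → ℝ, fromBlocks K B A 0 *ᵥ x = 0 → x = 0) :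
    ∀ x : Fin n ⊕ Fin p → ℝ, fromBlocks K B 0 (-(A * Kp * B)) *ᵥ x = 0 → x = 0 := by
  intro x hx
  apply hfull
  have hKK : Kp * K = 1 := by
    rw [hKp, Matrix.mul_assoc]
    exact Matrix.nonsing_inv_mul _ ((Matrix.isUnit_iff_isUnit_det _).1 hK)
  rw [fromBlocks_mulVec] at hx ⊢
  have h1 : K *ᵥ (x ∘ Sum.inl) + B *ᵥ (x ∘ Sum.inr) = 0 := by
    funext i
    exact congrFun hx (Sum.inl i)
  have h2 : (0 : Matrix (Fin q) (Fin n) ℝ) *ᵥ (x ∘ Sum.inl)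
      + (-(A * Kp * B)) *ᵥ (x ∘ Sum.inr) = 0 := by
    funext i
    exact congrFun hx (Sum.inr i)
  rw [Matrix.zero_mulVec, zero_add, Matrix.neg_mulVec] at h2
  have h3 : (A * Kp) *ᵥ (K *ᵥ (x ∘ Sum.inl) + B *ᵥ (x ∘ Sum.inr)) = 0 := by
    rw [h1, Matrix.mulVec_zero]
  rw [Matrix.mulVec_add, Matrix.mulVec_mulVec, Matrix.mulVec_mulVec, Matrix.mul_assoc A Kp K,
    hKK, Matrix.mul_one, neg_eq_zero.1 h2, add_zero] at h3
  rw [h1, h3, Matrix.zero_mulVec, add_zero]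
  funext i
  cases i <;> rfl
end

section
/- Correctness of the nonoverlapping DDM algorithm: Let K be a real m×n matrix with KᵀK invertible, K⁺ := (KᵀK)⁻¹Kᵀ, A a real q×n matrix, B a real m×p matrix, and F ∈ ℝᵐ, and suppose the block matrix [[K, B], [A, 0]] has full column rank. Then S := Bᵀ·(I + K⁺ᵀAᵀA K⁺ − K·K⁺)·B is invertible; setting u_Γ := S⁻¹·Bᵀ·(I + K⁺ᵀAᵀA K⁺ − K·K⁺)·F and c := K⁺·(F − B·u_Γ), the pair (c, u_Γ) is the unique solution of the system KᵀK·c + KᵀB·u = Kᵀ·F, BᵀK·c + Bᵀ(I + K⁺ᵀAᵀA K⁺)B·u = Bᵀ(I + K⁺ᵀAᵀA K⁺)·F. -/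
open Matrix

/-- correctness of the nonoverlapping DDM algorithm. If `[[K, B], [A, 0]]`
has full column rank, then `S := Bᵀ(I + K⁺ᵀAᵀAK⁺ − KK⁺)B` is invertible, and with
`u_Γ := S⁻¹Bᵀ(I + K⁺ᵀAᵀAK⁺ − KK⁺)F` and `c := K⁺(F − Bu_Γ)`, the pair `(c, u_Γ)` is
the unique solution of the normal equations. -/
theorem stmt8 (m n q p : ℕ) (K : Matrix (Fin m) (Fin n) ℝ)
    (hK : IsUnit (Kᵀ * K))
    (Kp : Matrix (Fin n) (Fin m) ℝ) (hKp : Kp = (Kᵀ * K)⁻¹ * Kᵀ)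
    (A : Matrix (Fin q) (Fin n) ℝ) (B : Matrix (Fin m) (Fin p) ℝ)
    (F : Fin m → ℝ)
    (hfull : ∀ x : Fin n ⊕ Fin p → ℝ, fromBlocks K B A 0 *ᵥ x = 0 → x = 0)
    (S : Matrix (Fin p) (Fin p) ℝ)
    (hS : S = Bᵀ * (1 + Kpᵀ * Aᵀ * A * Kp - K * Kp) * B)
    (uΓ : Fin p → ℝ)
    (huΓ : uΓ = S⁻¹ *ᵥ (Bᵀ *ᵥ ((1 + Kpᵀ * Aᵀ * A * Kp - K * Kp) *ᵥ F)))
    (c : Fin n → ℝ) (hc : c = Kp *ᵥ (F - B *ᵥ uΓ)) :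
    IsUnit S ∧
    ((Kᵀ * K) *ᵥ c + (Kᵀ * B) *ᵥ uΓ = Kᵀ *ᵥ F ∧
     (Bᵀ * K) *ᵥ c + (Bᵀ * (1 + Kpᵀ * Aᵀ * A * Kp) * B) *ᵥ uΓ =
       (Bᵀ * (1 + Kpᵀ * Aᵀ * A * Kp)) *ᵥ F) ∧
    ∀ (c' : Fin n → ℝ) (u' : Fin p → ℝ),
      ((Kᵀ * K) *ᵥ c' + (Kᵀ * B) *ᵥ u' = Kᵀ *ᵥ F ∧
       (Bᵀ * K) *ᵥ c' + (Bᵀ * (1 + Kpᵀ * Aᵀ * A * Kp) * B) *ᵥ u' =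
         (Bᵀ * (1 + Kpᵀ * Aᵀ * A * Kp)) *ᵥ F) →
      c' = c ∧ u' = uΓ := by
  have hdet : IsUnit (Kᵀ * K).det := (Matrix.isUnit_iff_isUnit_det _).1 hK
  have h1 : Kᵀ * K * Kp = Kᵀ := by
    rw [hKp, Matrix.mul_nonsing_inv_cancel_left _ _ hdet]
  have h1' : Kᵀ * (K * Kp) = Kᵀ := by rw [← Matrix.mul_assoc, h1]
  have hPT : (K * Kp)ᵀ = K * Kp := by
    rw [hKp]
    simp only [Matrix.transpose_mul, Matrix.transpose_nonsing_inv, Matrix.transpose_transpose,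
      Matrix.mul_assoc]
  have hPP : (K * Kp) * (K * Kp) = K * Kp := by
    nth_rewrite 1 [← hPT]
    rw [Matrix.transpose_mul, Matrix.mul_assoc, h1', ← Matrix.transpose_mul, hPT]
  have hQ : (1 - K * Kp)ᵀ * (1 - K * Kp) = 1 - K * Kp := by
    rw [Matrix.transpose_sub, hPT, Matrix.transpose_one, Matrix.mul_sub, Matrix.sub_mul,
      Matrix.sub_mul, hPP]
    simp
  have hS2 : S = ((1 - K * Kp) * B)ᵀ * ((1 - K * Kp) * B) + (A * Kp * B)ᵀ * (A * Kp * B) := by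
    have e : ((1 - K * Kp) * B)ᵀ * ((1 - K * Kp) * B) = Bᵀ * (1 - K * Kp) * B := by
      rw [Matrix.transpose_mul, Matrix.mul_assoc, ← Matrix.mul_assoc _ _ B, hQ, Matrix.mul_assoc]
    rw [e, hS]
    simp only [Matrix.transpose_mul, Matrix.mul_sub, Matrix.mul_add, Matrix.sub_mul,
      Matrix.add_mul, Matrix.mul_assoc]
    abel
  have hSu : IsUnit S := by
    rw [← Matrix.mulVec_injective_iff_isUnit]
    refine (injective_iff_map_eq_zero (Matrix.mulVecLin S)).2 ?_
    intro u hu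
    rw [Matrix.mulVecLin_apply] at hu
    have h0 : u ⬝ᵥ (S *ᵥ u) = 0 := by rw [hu]; simp
    have key : ∀ {r : ℕ} (M : Matrix (Fin r) (Fin p) ℝ),
        u ⬝ᵥ ((Mᵀ * M) *ᵥ u) = (M *ᵥ u) ⬝ᵥ (M *ᵥ u) := by
      intro r M
      rw [← Matrix.mulVec_mulVec, Matrix.dotProduct_mulVec, Matrix.vecMul_transpose]
    have nn : ∀ {r : ℕ} (v : Fin r → ℝ), 0 ≤ v ⬝ᵥ v := fun v =>
      Finset.sum_nonneg fun i _ => mul_self_nonneg _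
    rw [hS2, Matrix.add_mulVec, dotProduct_add, key, key] at h0
    have a1 := nn (((1 - K * Kp) * B) *ᵥ u)
    have a2 := nn ((A * Kp * B) *ᵥ u)
    have b1 : ((1 - K * Kp) * B) *ᵥ u = 0 := dotProduct_self_eq_zero.1 (by linarith)
    have b2 : (A * Kp * B) *ᵥ u = 0 := dotProduct_self_eq_zero.1 (by linarith)
    have hx := hfull (Sum.elim (-(Kp *ᵥ (B *ᵥ u))) u) (by
      rw [Matrix.fromBlocks_mulVec]
      have c1 : K *ᵥ (-(Kp *ᵥ (B *ᵥ u))) + B *ᵥ u = 0 := by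
        rw [← b1, Matrix.sub_mul, Matrix.sub_mulVec, Matrix.one_mul, Matrix.mulVec_neg]
        simp only [Matrix.mulVec_mulVec, Matrix.mul_assoc]
        abel
      have c2 : A *ᵥ (-(Kp *ᵥ (B *ᵥ u))) = 0 := by
        rw [Matrix.mulVec_neg]
        simp only [Matrix.mulVec_mulVec]
        rw [← Matrix.mul_assoc, b2, neg_zero]
      simp only [Sum.elim_comp_inl, Sum.elim_comp_inr, Matrix.zero_mulVec, add_zero]
      rw [c1, c2]
      ext i; cases i <;> rfl)
    ext i
    exact congrFun hx (Sum.inr i)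
  have hSd : IsUnit S.det := (Matrix.isUnit_iff_isUnit_det _).1 hSu
  have f1 : ∀ (c' : Fin n → ℝ) (u' : Fin p → ℝ),
      (Kᵀ * K) *ᵥ c' + (Kᵀ * B) *ᵥ u' = Kᵀ *ᵥ F ↔ c' = Kp *ᵥ (F - B *ᵥ u') := by
    intro c' u'
    constructor
    · intro h
      have h2 : (Kᵀ * K) *ᵥ c' = Kᵀ *ᵥ (F - B *ᵥ u') := by
        rw [Matrix.mulVec_sub, ← h, Matrix.mulVec_mulVec]; abel
      rw [hKp, ← Matrix.mulVec_mulVec, ← h2, Matrix.mulVec_mulVec,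
        Matrix.nonsing_inv_mul _ hdet, Matrix.one_mulVec]
    · rintro rfl
      rw [Matrix.mulVec_mulVec, h1, Matrix.mulVec_sub, Matrix.mulVec_mulVec]; abel
  have f2 : ∀ (u' : Fin p → ℝ),
      (Bᵀ * K) *ᵥ (Kp *ᵥ (F - B *ᵥ u')) + (Bᵀ * (1 + Kpᵀ * Aᵀ * A * Kp) * B) *ᵥ u' =
         (Bᵀ * (1 + Kpᵀ * Aᵀ * A * Kp)) *ᵥ F ↔ u' = uΓ := by
    intro u'
    have g : S *ᵥ u' = Bᵀ *ᵥ ((1 + Kpᵀ * Aᵀ * A * Kp - K * Kp) *ᵥ F) ↔ u' = uΓ := by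
      constructor
      · intro h
        rw [huΓ, ← h, Matrix.mulVec_mulVec, Matrix.nonsing_inv_mul _ hSd, Matrix.one_mulVec]
      · rintro rfl
        rw [huΓ, Matrix.mulVec_mulVec, Matrix.mul_nonsing_inv _ hSd, Matrix.one_mulVec]
    rw [← g, hS, ← sub_eq_zero, ← sub_eq_zero (a := _ *ᵥ u')]
    apply Eq.congr_left
    simp only [Matrix.mulVec_sub, Matrix.mulVec_add, Matrix.one_mulVec, Matrix.mul_one,
      Matrix.one_mul, Matrix.mulVec_mulVec, Matrix.mul_sub, Matrix.mul_add,
      Matrix.sub_mul, Matrix.add_mul, Matrix.sub_mulVec, Matrix.add_mulVec, Matrix.mul_assoc]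
    abel
  refine ⟨hSu, ⟨(f1 _ _).2 hc, ?_⟩, ?_⟩
  · rw [hc]; exact (f2 _).2 rfl
  · rintro c' u' ⟨e1, e2⟩
    have e3 := (f1 _ _).1 e1
    rw [e3] at e2
    have e4 := (f2 _).1 e2
    exact ⟨by rw [e3, e4, hc], e4⟩
end

section
/- Deterministic core of the Proposition: For s = 1, …, N, let Kˢ be a real mˢ×nˢ matrix whose rows are partitioned into an 'interior' index set Rˢ and its complement, and let Bˢ be a real mˢ×p matrix whose rows indexed by Rˢ are all zero. Let K := diag(K¹, …, Kᴺ) be the block diagonal matrix, let B be the matrix obtained by stacking B¹, …, Bᴺ vertically, and let A be any real q×(n¹+⋯+nᴺ) matrix. If for each s the submatrix of Kˢ consisting of the rows indexed by Rˢ has full column rank, and the stacked matrix B has full column rank, then the block matrix [[K, B], [A, 0]] has full column rank. -/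
open Matrix

/-- deterministic core of the Proposition. If each row-submatrix of `Kˢ`
on the interior rows `Rˢ` has full column rank, the rows of `Bˢ` indexed by `Rˢ`
vanish, and the vertically stacked matrix `B` has full column rank, then the block
matrix `[[diag(K¹,…,Kᴺ), B], [A, 0]]` has full column rank. -/
theorem stmt9 (N q p : ℕ) (m n : Fin N → ℕ)
    (K : ∀ s, Matrix (Fin (m s)) (Fin (n s)) ℝ)
    (B : ∀ s, Matrix (Fin (m s)) (Fin p) ℝ)
    (R : ∀ s, Set (Fin (m s)))
    (A : Matrix (Fin q) ((s : Fin N) × Fin (n s)) ℝ)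
    (hB0 : ∀ s, ∀ i ∈ R s, ∀ j, B s i j = 0)
    (hKfull : ∀ s, ∀ v : Fin (n s) → ℝ, (∀ i ∈ R s, (K s *ᵥ v) i = 0) → v = 0)
    (hBfull : ∀ w : Fin p → ℝ,
      (Matrix.of fun (i : (s : Fin N) × Fin (m s)) j => B i.1 i.2 j) *ᵥ w = 0 → w = 0) :
    ∀ x : ((s : Fin N) × Fin (n s)) ⊕ Fin p → ℝ,
      fromBlocks (Matrix.blockDiagonal' K)
          (Matrix.of fun (i : (s : Fin N) × Fin (m s)) j => B i.1 i.2 j) A 0 *ᵥ x = 0 →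
        x = 0 := by
  intro x hx
  have hrow : ∀ (s : Fin N) (i : Fin (m s)),
      (K s *ᵥ fun j => x (Sum.inl ⟨s, j⟩)) i + (B s *ᵥ fun j => x (Sum.inr j)) i = 0 := by
    intro s i
    have h := congrFun hx (Sum.inl ⟨s, i⟩)
    simp only [Matrix.mulVec, dotProduct, Fintype.sum_sum_type, fromBlocks_apply₁₁,
      fromBlocks_apply₁₂, Fintype.sum_sigma, Pi.zero_apply, Matrix.of_apply] at h ⊢
    rw [Finset.sum_eq_single s] at h
    · simpa only [Matrix.blockDiagonal'_apply_eq] using h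
    · intro t _ hts
      apply Finset.sum_eq_zero
      intro j _
      rw [Matrix.blockDiagonal'_apply_ne _ _ _ (Ne.symm hts), zero_mul]
    · intro hs
      exact absurd (Finset.mem_univ s) hs
  have hv : ∀ s, (fun j => x (Sum.inl ⟨s, j⟩)) = 0 := by
    intro s
    apply hKfull s
    intro i hi
    have h := hrow s i
    have h0 : (B s *ᵥ fun j => x (Sum.inr j)) i = 0 := by
      simp [Matrix.mulVec, dotProduct, hB0 s i hi]
    rwa [h0, add_zero] at h
  have hw : (fun j => x (Sum.inr j)) = 0 := by
    apply hBfull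
    funext ⟨s, i⟩
    have h := hrow s i
    rw [hv s, Matrix.mulVec_zero, Pi.zero_apply, zero_add] at h
    exact h
  funext k
  rcases k with ⟨s, j⟩ | j
  · exact congrFun (hv s) j
  · exact congrFun hw j
end
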